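/- Define ψ* = inf over z ∈ ℝ of ((1 - e^z + z·e^z)(e^z + 1))/(e^z - 1)² (with the function extended by its limit value 2 at z = 0). Then ψ* > 0; in particular ψ* ≥ 8/9 is false to prove exactly, but one can show ψ* ≥ 0.89 and ψ* ≤ 0.9. -/

import Mathlib

noncomputable def psiStar : ℝ :=
  sInf ((fun z : ℝ =>
    ((1 - Real.exp z + z * Real.exp z) * (Real.exp z + 1)) / (Real.exp z - 1) ^ 2) ''
    {z : ℝ | z ≠ 0})

/-!
Substituting `u = exp (-z)` identifies `ψ*` as the largest `a` for which
`log u ≤ (u - 1) - a * (u - 1) ^ 2 / (u + 1)` holds for all `u > 0`. The difference of the two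
sides vanishes at `1`, and its derivative has the sign of
`(u - 1) * ((u + 1) ^ 2 - a * u * (u + 3))`. For `a = 8 / 9` the second factor is
`(u - 3) ^ 2 / 9`, so the inequality holds everywhere. For `a = 0.89` the factor is still
nonnegative on `(0, 2]`, and for `u ≥ 2` the inequality follows from the case `a = 8 / 9` at
`u / 2` and a numerical bound on `log 2`. Evaluating at `u = 4`, near the point where the
constant is attained, bounds `ψ*` from above.
-/

open Real Set

/-- The slack at `u` in the inequality `log u ≤ (u - 1) - a * (u - 1) ^ 2 / (u + 1)`, whose best
constant `a` on `(0, ∞)` is `psiStar`. -/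
noncomputable def logGap (a u : ℝ) : ℝ :=
  (u - 1) - a * (u - 1) ^ 2 / (u + 1) - log u

section LogGap

variable {a c u : ℝ}

lemma logGap_one (a : ℝ) : logGap a 1 = 0 := by
  simp [logGap]

lemma hasDerivAt_logGap (a : ℝ) (hu : 0 < u) :
    HasDerivAt (logGap a)
      ((u - 1) * ((u + 1) ^ 2 - a * u * (u + 3)) / (u * (u + 1) ^ 2)) u := by
  have hsub : HasDerivAt (fun v : ℝ => v - 1) 1 u := (hasDerivAt_id' u).sub_const 1
  have hadd : HasDerivAt (fun v : ℝ => v + 1) 1 u := (hasDerivAt_id' u).add_const 1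
  have hquot := ((hsub.pow 2).const_mul a).div hadd (by positivity)
  refine ((hsub.sub hquot).sub (hasDerivAt_log hu.ne')).congr_deriv ?_
  simp only [Pi.pow_apply]
  field_simp
  ring

lemma isMinOn_logGap_Ioc (hc : 1 ≤ c)
    (h : ∀ v, 0 < v → v < c → a * v * (v + 3) ≤ (v + 1) ^ 2) :
    IsMinOn (logGap a) (Ioc 0 c) 1 := by
  have hdiff (v : ℝ) (hv : 0 < v) : DifferentiableAt ℝ (logGap a) v :=
    (hasDerivAt_logGap a hv).differentiableAt
  refine isMinOn_Ioc_of_deriv (hdiff 1 one_pos).continuousAt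
    (hdiff c (by linarith)).continuousAt
    (fun v hv => (hdiff v hv.1).differentiableWithinAt)
    (fun v hv => (hdiff v (one_pos.trans hv.1)).differentiableWithinAt) ?_ ?_
  · rintro v ⟨hv0, hv1⟩
    have hfactor := h v hv0 (by linarith)
    rw [(hasDerivAt_logGap a hv0).deriv]
    exact div_nonpos_of_nonpos_of_nonneg
      (mul_nonpos_of_nonpos_of_nonneg (by linarith) (by linarith)) (by positivity)
  · rintro v ⟨hv1, hvc⟩
    have hv0 : 0 < v := by linarith
    have hfactor := h v hv0 hvc
    rw [(hasDerivAt_logGap a hv0).deriv]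
    exact div_nonneg (mul_nonneg (by linarith) (by linarith)) (by positivity)

lemma logGap_nonneg_of_le_eight_ninths (ha : a ≤ 8 / 9) (hu : 0 < u) : 0 ≤ logGap a u := by
  have hmin : IsMinOn (logGap a) (Ioc 0 (max 1 u)) 1 := by
    refine isMinOn_logGap_Ioc (le_max_left 1 u) fun v hv _ => ?_
    calc a * v * (v + 3) ≤ 8 / 9 * v * (v + 3) := by gcongr
      _ ≤ (v + 1) ^ 2 := by linarith [sq_nonneg (v - 3)]
  simpa only [logGap_one] using isMinOn_iff.1 hmin u ⟨hu, le_max_right 1 u⟩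

lemma logGap_nonneg_of_le_two (ha : a ≤ 0.9) (hu : 0 < u) (hu2 : u ≤ 2) :
    0 ≤ logGap a u := by
  have hmin : IsMinOn (logGap a) (Ioc 0 2) 1 := by
    refine isMinOn_logGap_Ioc one_le_two fun v hv hv2 => ?_
    have hquadratic : 0 ≤ (2 - v) * (5 - v) := mul_nonneg (by linarith) (by linarith)
    calc a * v * (v + 3) ≤ 0.9 * v * (v + 3) := by gcongr
      _ ≤ (v + 1) ^ 2 := by linarith
  simpa only [logGap_one] using isMinOn_iff.1 hmin u ⟨hu, hu2⟩

lemma log_le_log_add_rational (hc : 0 < c) (hu : 0 < u) :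
    log u ≤ log c + (u - c) / c - 8 / 9 * (u - c) ^ 2 / (c * (u + c)) := by
  have hgap := logGap_nonneg_of_le_eight_ninths le_rfl (div_pos hu hc)
  rw [logGap, log_div hu.ne' hc.ne'] at hgap
  have hlin : u / c - 1 = (u - c) / c := by field_simp
  have hquad : 8 / 9 * (u / c - 1) ^ 2 / (u / c + 1) =
      8 / 9 * (u - c) ^ 2 / (c * (u + c)) := by field_simp
  linarith

lemma logGap_nonneg_of_two_le (ha : a ≤ 0.89) (hu : 2 ≤ u) : 0 ≤ logGap a u := by
  have hu1 : 0 < u + 1 := by linarith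
  have hu2 : 0 < u + 2 := by linarith
  have hlog := log_le_log_add_rational two_pos (two_pos.trans_le hu)
  have hmono : a * (u - 1) ^ 2 / (u + 1) ≤ 0.89 * (u - 1) ^ 2 / (u + 1) := by gcongr
  have hrational : 0.694 ≤ (u - 1) - 0.89 * (u - 1) ^ 2 / (u + 1) -
      ((u - 2) / 2 - 8 / 9 * (u - 2) ^ 2 / (2 * (u + 2))) := by
    rw [← sub_nonneg]
    field_simp
    -- The cubic numerator has its minimum on `[2, ∞)` near `4.05`.
    nlinarith [mul_nonneg (sub_nonneg.2 hu) (sq_nonneg (u - 4.05)), sq_nonneg (u - 4.05)]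
  rw [logGap]
  linarith [log_two_lt_d9]

lemma logGap_nonneg (ha : a ≤ 0.89) (hu : 0 < u) : 0 ≤ logGap a u := by
  rcases le_total u 2 with hu2 | hu2
  · exact logGap_nonneg_of_le_two (by linarith) hu hu2
  · exact logGap_nonneg_of_two_le ha hu2

end LogGap

lemma le_ratio_iff_logGap_exp_neg_nonneg {a z : ℝ} (hz : z ≠ 0) :
    a ≤ ((1 - exp z + z * exp z) * (exp z + 1)) / (exp z - 1) ^ 2 ↔
      0 ≤ logGap a (exp (-z)) := by
  have hden : exp z - 1 ≠ 0 := sub_ne_zero.2 (mt (exp_eq_one_iff z).1 hz)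
  have hgap : (1 - exp z + z * exp z) * (exp z + 1) - a * (exp z - 1) ^ 2 =
      exp z * (exp z + 1) * logGap a (exp (-z)) := by
    rw [logGap, log_exp, exp_neg]
    field_simp
    ring
  rw [le_div_iff₀ (by positivity), ← sub_nonneg, hgap, mul_nonneg_iff_of_pos_left (by positivity)]

lemma le_psiStar_iff {a : ℝ} : a ≤ psiStar ↔ ∀ u, 0 < u → 0 ≤ logGap a u := by
  refine (le_csInf_iff ⟨0, ?_⟩ ⟨_, mem_image_of_mem _ one_ne_zero⟩).trans ⟨fun h u hu => ?_, ?_⟩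
  · rintro _ ⟨z, hz, rfl⟩
    exact (le_ratio_iff_logGap_exp_neg_nonneg hz).2 (logGap_nonneg (by norm_num) (exp_pos _))
  · rcases eq_or_ne u 1 with rfl | hu1
    · exact (logGap_one a).ge
    have hz : -log u ≠ 0 := neg_ne_zero.2 (log_ne_zero_of_pos_of_ne_one hu hu1)
    simpa only [neg_neg, exp_log hu] using
      (le_ratio_iff_logGap_exp_neg_nonneg hz).1 (h _ (mem_image_of_mem _ hz))
  · rintro h _ ⟨z, hz, rfl⟩
    exact (le_ratio_iff_logGap_exp_neg_nonneg hz).2 (h _ (exp_pos _))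

theorem stmt_2 : 0 < psiStar ∧ 0.89 ≤ psiStar ∧ psiStar ≤ 0.9 := by
  have hlower : 0.89 ≤ psiStar := le_psiStar_iff.2 fun _ => logGap_nonneg le_rfl
  have hfour : 0 ≤ logGap psiStar 4 := le_psiStar_iff.1 le_rfl 4 four_pos
  have hupper : psiStar ≤ 0.9 := by
    rw [logGap, log_four_eq] at hfour
    linarith [log_two_gt_d9]
  exact ⟨by linarith, hlower, hupper⟩
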